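/- Define the alternating product A : List ℕ → Matrix (Fin 2) (Fin 2) ℤ by A([q0, q1, q2, ..., qk]) = R1^{q0} * L1^{q1} * R1^{q2} * ⋯ (powers of R1 and L1 alternating, starting with R1). Then every 2×2 integer matrix M with nonnegative entries and determinant 1, M ≠ identity, has a unique representation M = A(L) where L is a nonempty list of natural numbers all of whose entries after the first are ≥ 1; moreover, for this L, M appears in row (sum of the entries of L) of the matrix tree, i.e., there exists j with W(L.sum, j) = M. (Depth formula: the vertex with continued fraction [q0, q1, ..., qk + z] or [q0, q1, ..., qk, z] lies in row q0 + q1 + ⋯ + qk of the tree.) -/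

import Mathlib

/-!
The matrices `L1` and `R1` freely generate the monoid of nonnegative integer matrices of
determinant `1`, and lists `[q₀, q₁, …, q_k]` with `q₁, …, q_k ≥ 1` are run-length encodings
of words in the two generators.

*Existence.* In a nonnegative matrix of determinant `1` other than the identity, one row
dominates the other entrywise (`row_dominates`). Subtracting the smaller row peels off a factor
`R1` or `L1` on the left and lowers the entry sum, so induction applies (`exists_encoding`).

*Uniqueness.* Let `t` be the sum of the row that the generator `B` leaves unchanged. Multiplying
by `B ^ q` adds `q * t` to the other row sum. If the remaining factor does not start with `B`,
its other row sum lies between `1` and `t`, so `q` is determined by division with remainder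
(`gen_pow_mul_inj`), and the encoding is read off one exponent at a time (`altProd_inj`).

*Depth.* Each left multiplication by a generator moves one row down in the tree, and `A L` is a
product of `L.sum` generators (`altProd_mem_mRow`).
-/

def L1 : Matrix (Fin 2) (Fin 2) ℤ := !![1, 0; 1, 1]

def R1 : Matrix (Fin 2) (Fin 2) ℤ := !![1, 1; 0, 1]

/-- Row `n` of the matrix tree, as a list of matrices. -/
def mRow : ℕ → List (Matrix (Fin 2) (Fin 2) ℤ)
  | 0 => [1]
  | n + 1 => (mRow n).flatMap fun M => [L1 * M, R1 * M]

/-- `W n j` is the `j`-th entry (1-indexed) of row `n` of the matrix tree. -/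
def W (n j : ℕ) : Matrix (Fin 2) (Fin 2) ℤ := (mRow n).getD (j - 1) 0

/-- Alternating products of powers of `R1` and `L1`, starting with `R1` when
the boolean flag is `true`. -/
def altProd : List ℕ → Bool → Matrix (Fin 2) (Fin 2) ℤ
  | [], _ => 1
  | q :: L, b => (if b then R1 else L1) ^ q * altProd L (!b)

/-- `A [q₀, q₁, …, q_k] = R1^q₀ * L1^q₁ * R1^q₂ * ⋯`. -/
def A (L : List ℕ) : Matrix (Fin 2) (Fin 2) ℤ := altProd L true

/-- The generator `R1` for `true` and `L1` for `false`, matching the flag of `altProd`. -/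
def gen (b : Bool) : Matrix (Fin 2) (Fin 2) ℤ := if b then R1 else L1

/-- The sum of the row that left multiplication by `gen b` changes: row `0` for `b = true`,
row `1` for `b = false`. -/
def rowSum (b : Bool) (M : Matrix (Fin 2) (Fin 2) ℤ) : ℤ :=
  if b then M 0 0 + M 0 1 else M 1 0 + M 1 1

lemma altProd_cons (q : ℕ) (L : List ℕ) (b : Bool) :
    altProd (q :: L) b = gen b ^ q * altProd L (!b) := rfl

lemma rowSum_gen_mul (b : Bool) (M : Matrix (Fin 2) (Fin 2) ℤ) :
    rowSum b (gen b * M) = rowSum b M + rowSum (!b) M := by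
  cases b <;> simp [rowSum, gen, L1, R1, Matrix.mul_apply, Fin.sum_univ_two] <;> ring

lemma rowSum_not_gen_mul (b : Bool) (M : Matrix (Fin 2) (Fin 2) ℤ) :
    rowSum (!b) (gen b * M) = rowSum (!b) M := by
  cases b <;> simp [rowSum, gen, L1, R1, Matrix.mul_apply, Fin.sum_univ_two]

lemma rowSum_not_gen_pow_mul (b : Bool) (q : ℕ) (M : Matrix (Fin 2) (Fin 2) ℤ) :
    rowSum (!b) (gen b ^ q * M) = rowSum (!b) M := by
  induction q with
  | zero => simp
  | succ q ih => rw [pow_succ', mul_assoc, rowSum_not_gen_mul, ih]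

lemma rowSum_gen_pow_mul (b : Bool) (q : ℕ) (M : Matrix (Fin 2) (Fin 2) ℤ) :
    rowSum b (gen b ^ q * M) = rowSum b M + q * rowSum (!b) M := by
  induction q with
  | zero => simp
  | succ q ih =>
    rw [pow_succ', mul_assoc, rowSum_gen_mul, ih, rowSum_not_gen_pow_mul]
    push_cast
    ring

lemma rowSum_altProd_pos (L : List ℕ) (b c : Bool) : 1 ≤ rowSum c (altProd L b) := by
  induction L generalizing b c with
  | nil => cases c <;> simp [altProd, rowSum]
  | cons q L ih =>
    rw [altProd_cons]
    obtain rfl | rfl : c = b ∨ c = !b := by cases b <;> cases c <;> simp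
    · rw [rowSum_gen_pow_mul]
      have h1 := ih (!c) c
      have h2 := ih (!c) (!c)
      have : (0 : ℤ) ≤ q * rowSum (!c) (altProd L (!c)) := by positivity
      linarith
    · rw [rowSum_not_gen_pow_mul]
      exact ih _ _

/-- A word that starts with `gen b` has its larger row sum in the row that `gen b` changes. -/
lemma rowSum_altProd_lt {q : ℕ} (hq : 1 ≤ q) (L : List ℕ) (b : Bool) :
    rowSum (!b) (altProd (q :: L) b) < rowSum b (altProd (q :: L) b) := by
  rw [altProd_cons, rowSum_gen_pow_mul, rowSum_not_gen_pow_mul]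
  have h1 := rowSum_altProd_pos L (!b) b
  have h2 := rowSum_altProd_pos L (!b) (!b)
  have hq' : (1 : ℤ) ≤ q := by exact_mod_cast hq
  nlinarith

lemma rowSum_altProd_le {L : List ℕ} (hL : ∀ a ∈ L, 1 ≤ a) (b : Bool) :
    rowSum b (altProd L (!b)) ≤ rowSum (!b) (altProd L (!b)) := by
  cases L with
  | nil => cases b <;> simp [altProd, rowSum]
  | cons q L =>
    have := rowSum_altProd_lt (hL q (by simp)) L (!b)
    rw [Bool.not_not] at this
    exact this.le

lemma gen_pow_mul_cancel {b : Bool} {q : ℕ} {X Y : Matrix (Fin 2) (Fin 2) ℤ}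
    (h : gen b ^ q * X = gen b ^ q * Y) : X = Y := by
  have hu : IsUnit (gen b ^ q) := by
    rw [Matrix.isUnit_iff_isUnit_det, Matrix.det_pow]
    cases b <;> simp [gen, L1, R1, Matrix.det_fin_two]
  exact hu.mul_left_cancel h

/-- The exponent of the leading generator is determined: the row sums of `X` and `Y` are
representatives in `[1, t]` of the same residue modulo the common unchanged row sum `t`. -/
lemma gen_pow_mul_inj {b : Bool} {q q' : ℕ} {X Y : Matrix (Fin 2) (Fin 2) ℤ}
    (hX : 1 ≤ rowSum b X) (hX' : rowSum b X ≤ rowSum (!b) X)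
    (hY : 1 ≤ rowSum b Y) (hY' : rowSum b Y ≤ rowSum (!b) Y)
    (h : gen b ^ q * X = gen b ^ q' * Y) : q = q' ∧ X = Y := by
  have h1 := congrArg (rowSum b) h
  have h2 := congrArg (rowSum (!b)) h
  rw [rowSum_gen_pow_mul, rowSum_gen_pow_mul] at h1
  rw [rowSum_not_gen_pow_mul, rowSum_not_gen_pow_mul] at h2
  rw [← h2] at h1 hY'
  have hq : q = q' := by
    rcases lt_trichotomy q q' with hlt | heq | hlt
    · have : (q : ℤ) + 1 ≤ q' := by exact_mod_cast hlt
      nlinarith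
    · exact heq
    · have : (q' : ℤ) + 1 ≤ q := by exact_mod_cast hlt
      nlinarith
  subst hq
  exact ⟨rfl, gen_pow_mul_cancel h⟩

lemma altProd_cons_ne_one {q : ℕ} (hq : 1 ≤ q) (L : List ℕ) (b : Bool) :
    altProd (q :: L) b ≠ 1 := by
  intro h
  have := rowSum_altProd_lt hq L b
  rw [h] at this
  cases b <;> simp [rowSum] at this

lemma altProd_inj {L L' : List ℕ} (hL : ∀ a ∈ L, 1 ≤ a) (hL' : ∀ a ∈ L', 1 ≤ a)
    {b : Bool} {q q' : ℕ} (h : altProd (q :: L) b = altProd (q' :: L') b) :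
    q = q' ∧ L = L' := by
  induction L generalizing L' b q q' with
  | nil =>
    obtain ⟨hq, hX⟩ := gen_pow_mul_inj (rowSum_altProd_pos _ _ _) (rowSum_altProd_le hL b)
      (rowSum_altProd_pos _ _ _) (rowSum_altProd_le hL' b) h
    refine ⟨hq, ?_⟩
    cases L' with
    | nil => rfl
    | cons p' L' => exact absurd hX.symm (altProd_cons_ne_one (hL' p' (by simp)) L' _)
  | cons p L ih =>
    obtain ⟨hq, hX⟩ := gen_pow_mul_inj (rowSum_altProd_pos _ _ _) (rowSum_altProd_le hL b)
      (rowSum_altProd_pos _ _ _) (rowSum_altProd_le hL' b) h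
    refine ⟨hq, ?_⟩
    cases L' with
    | nil => exact absurd hX (altProd_cons_ne_one (hL p (by simp)) L _)
    | cons p' L' =>
      obtain ⟨rfl, rfl⟩ := ih (fun a ha => hL a (by simp [ha]))
        (fun a ha => hL' a (by simp [ha])) hX
      rfl

lemma row_dominates {a b c d : ℤ} (ha : 0 ≤ a) (hb : 0 ≤ b) (hc : 0 ≤ c) (hd : 0 ≤ d)
    (hdet : a * d - b * c = 1) (hne : ¬(a = 1 ∧ b = 0 ∧ c = 0 ∧ d = 1)) :
    (c ≤ a ∧ d ≤ b) ∨ (a ≤ c ∧ b ≤ d) := by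
  by_contra! hcon
  obtain ⟨h1, h2⟩ := hcon
  rcases le_or_gt c a with hca | hac
  · have hbd := h1 hca
    have hac : c < a := by
      by_contra! hle
      linarith [h2 hle]
    -- Here `a * d ≥ (c + 1) * (b + 1)`, so determinant `1` forces `b = c = 0`.
    have hmul : (c + 1) * (b + 1) ≤ a * d :=
      mul_le_mul (by omega) (by omega) (by omega) ha
    have hb0 : b = 0 := by nlinarith
    have hc0 : c = 0 := by nlinarith
    subst hb0 hc0
    apply hne
    have ha1 : a = 1 := by nlinarith
    subst ha1
    exact ⟨rfl, rfl, rfl, by linarith⟩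
  · have := h2 hac.le
    nlinarith

lemma gen_true_mul_A {L : List ℕ} (hL : L ≠ [] ∧ ∀ a ∈ L.tail, 1 ≤ a) :
    ∃ L' : List ℕ, (L' ≠ [] ∧ ∀ a ∈ L'.tail, 1 ≤ a) ∧ R1 * A L = A L' := by
  obtain ⟨h0, h1⟩ := hL
  cases L with
  | nil => exact absurd rfl h0
  | cons q L =>
    refine ⟨(q + 1) :: L, ⟨by simp, h1⟩, ?_⟩
    simp [A, altProd, pow_succ', mul_assoc]

/-- The run-length encoding of a word after prepending `L1`: a leading exponent `0` means that
the word starts with `L1` or is empty, otherwise a new run of length `1` is opened. -/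
lemma gen_false_mul_A {L : List ℕ} (hL : L ≠ [] ∧ ∀ a ∈ L.tail, 1 ≤ a) :
    ∃ L' : List ℕ, (L' ≠ [] ∧ ∀ a ∈ L'.tail, 1 ≤ a) ∧ L1 * A L = A L' := by
  obtain ⟨h0, h1⟩ := hL
  match L, h0, h1 with
  | [0], _, _ => exact ⟨[0, 1], by simp, by simp [A, altProd]⟩
  | 0 :: p :: L, _, h1 =>
    refine ⟨0 :: (p + 1) :: L, ⟨by simp, ?_⟩, by simp [A, altProd, pow_succ', mul_assoc]⟩
    intro a ha
    simp only [List.tail_cons, List.mem_cons] at ha h1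
    rcases ha with rfl | ha
    · omega
    · exact h1 a (Or.inr ha)
  | (q + 1) :: L, _, h1 =>
    refine ⟨0 :: 1 :: (q + 1) :: L, ⟨by simp, ?_⟩, by simp [A, altProd]⟩
    intro a ha
    simp only [List.tail_cons, List.mem_cons] at ha h1
    rcases ha with rfl | rfl | ha
    · omega
    · omega
    · exact h1 a ha

/-- Existence of the encoding, by induction on a bound `n` for the entry sum. -/
lemma exists_encoding (n : ℕ) (a b c d : ℤ) (ha : 0 ≤ a) (hb : 0 ≤ b) (hc : 0 ≤ c) (hd : 0 ≤ d)
    (hdet : a * d - b * c = 1) (hn : a + b + c + d ≤ n) :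
    ∃ L : List ℕ, (L ≠ [] ∧ ∀ a ∈ L.tail, 1 ≤ a) ∧ !![a, b; c, d] = A L := by
  induction n generalizing a b c d with
  | zero =>
    have : a = 0 := by push_cast at hn; omega
    have : b = 0 := by push_cast at hn; omega
    simp_all
  | succ n ih =>
    push_cast at hn
    by_cases hone : a = 1 ∧ b = 0 ∧ c = 0 ∧ d = 1
    · obtain ⟨rfl, rfl, rfl, rfl⟩ := hone
      exact ⟨[0], by simp, by simp [A, altProd, Matrix.one_fin_two]⟩
    -- The row that gets subtracted is nonzero since the determinant is, so the entry sum drops.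
    rcases row_dominates ha hb hc hd hdet hone with ⟨h1, h2⟩ | ⟨h1, h2⟩
    · have hpos : 1 ≤ c + d := by
        by_contra! hlt
        have : c = 0 := by omega
        have : d = 0 := by omega
        simp_all
      obtain ⟨L, hL, hM⟩ := ih (a - c) (b - d) c d (by omega) (by omega) hc hd
        (by linarith) (by omega)
      obtain ⟨L', hL', hM'⟩ := gen_true_mul_A hL
      refine ⟨L', hL', ?_⟩
      rw [← hM', ← hM]
      simp [R1]
    · have hpos : 1 ≤ a + b := by
        by_contra! hlt
        have : a = 0 := by omega
        have : b = 0 := by omega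
        simp_all
      obtain ⟨L, hL, hM⟩ := ih a b (c - a) (d - b) ha hb (by omega) (by omega)
        (by linarith) (by omega)
      obtain ⟨L', hL', hM'⟩ := gen_false_mul_A hL
      refine ⟨L', hL', ?_⟩
      rw [← hM', ← hM]
      simp [L1]

lemma length_mRow (n : ℕ) : (mRow n).length = 2 ^ n := by
  induction n with
  | zero => rfl
  | succ n ih => simp [mRow, List.length_flatMap, ih, pow_succ]

lemma gen_pow_mul_mem_mRow {n : ℕ} {M : Matrix (Fin 2) (Fin 2) ℤ} (hM : M ∈ mRow n)
    (b : Bool) (q : ℕ) : gen b ^ q * M ∈ mRow (q + n) := by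
  induction q with
  | zero => simpa using hM
  | succ q ih =>
    rw [pow_succ', mul_assoc, Nat.succ_add]
    refine List.mem_flatMap.2 ⟨_, ih, ?_⟩
    cases b <;> simp [gen]

lemma altProd_mem_mRow (L : List ℕ) (b : Bool) : altProd L b ∈ mRow L.sum := by
  induction L generalizing b with
  | nil => simp [altProd, mRow]
  | cons q L ih =>
    rw [altProd_cons, List.sum_cons]
    exact gen_pow_mul_mem_mRow (ih _) b q

theorem matrix_depth_formula (M : Matrix (Fin 2) (Fin 2) ℤ)
    (hpos : ∀ i j, 0 ≤ M i j) (hdet : M.det = 1) (hne : M ≠ 1) :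
    (∃! L : List ℕ, (L ≠ [] ∧ ∀ a ∈ L.tail, 1 ≤ a) ∧ M = A L) ∧
      ∀ L : List ℕ, (L ≠ [] ∧ ∀ a ∈ L.tail, 1 ≤ a) → M = A L →
        ∃ j, 1 ≤ j ∧ j ≤ 2 ^ L.sum ∧ W L.sum j = M := by
  constructor
  · rw [Matrix.det_fin_two] at hdet
    obtain ⟨L, hL, hM⟩ := exists_encoding (M 0 0 + M 0 1 + M 1 0 + M 1 1).toNat
      (M 0 0) (M 0 1) (M 1 0) (M 1 1) (hpos _ _) (hpos _ _) (hpos _ _) (hpos _ _) hdet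
      (Int.self_le_toNat _)
    rw [← Matrix.eta_fin_two M] at hM
    refine ⟨L, ⟨hL, hM⟩, ?_⟩
    rintro L' ⟨hL', hM'⟩
    rcases L with _ | ⟨q, L⟩
    · exact absurd rfl hL.1
    rcases L' with _ | ⟨q', L'⟩
    · exact absurd rfl hL'.1
    obtain ⟨rfl, rfl⟩ := altProd_inj (b := true) hL'.2 hL.2 (hM'.symm.trans hM)
    rfl
  · intro L _ hM
    have hmem : M ∈ mRow L.sum := hM ▸ altProd_mem_mRow L true
    obtain ⟨i, hi, hiM⟩ := List.getElem_of_mem hmem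
    refine ⟨i + 1, by omega, ?_, ?_⟩
    · rw [length_mRow] at hi
      exact hi
    · simp [W, List.getD_eq_getElem?_getD, List.getElem?_eq_getElem hi, hiM]
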